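/- arXiv:1203.5810 — 2 statements merged into one kernel-verified Lean document; each statement's English description precedes it below -/
import Mathlib

section
/- Let M ≥ 0 be real, U ⊆ ℂⁿ open, and φ₁, φ₂ : U → ℝ C² functions such that L_{φⱼ}(x)(v) ≥ −M‖v‖² for all x ∈ U, v ∈ ℂⁿ and j = 1, 2. Then the function φ := log(e^{φ₁} + e^{φ₂}) is C² on U and satisfies L_φ(x)(v) ≥ −M‖v‖² for all x ∈ U and v ∈ ℂⁿ. -/
/-!
Write `φ = log (e^{φ₁} + e^{φ₂})`, `p = e^{φ₁ - φ}` and `q = e^{φ₂ - φ}`, so that `p, q > 0` and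
`p + q = 1`. Then `Dφ = p Dφ₁ + q Dφ₂`, and since `Dp = p (Dφ₁ - Dφ)`, `Dq = q (Dφ₂ - Dφ)`,
differentiating once more gives
`D²φ(w, w) = p D²φ₁(w, w) + q D²φ₂(w, w) + p q (Dφ₁ w - Dφ₂ w)²`.
Hence `D²φ(w, w)` is at least the convex combination of the `D²φⱼ(w, w)`, with weights that do not
depend on `w` (`hessian_logAddExp`, `exists_weights_le_hessian_logAddExp`). Using this inequality
for `w = v` and `w = i • v` shows that the Levi form of `φ` is at least the same convex
combination of the Levi forms of `φ₁` and `φ₂`, and any common lower bound of these is inherited.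
-/

/-- The Levi form of a real-valued function `u` on a complex normed space, at the point `x`
in the direction `v`: `L_u(x)(v) = (1/4)(D²u(x)(v,v) + D²u(x)(i·v, i·v))`, where `D²u(x)`
is the second real Fréchet derivative of `u` at `x`. -/
noncomputable def leviForm {E : Type*} [NormedAddCommGroup E] [NormedSpace ℂ E]
    (u : E → ℝ) (x v : E) : ℝ :=
  (1 / 4) * (iteratedFDeriv ℝ 2 u x ![v, v]
    + iteratedFDeriv ℝ 2 u x ![Complex.I • v, Complex.I • v])

section LogAddExp

variable {E : Type*} [NormedAddCommGroup E] [NormedSpace ℝ E]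

/-- The function `log (e^f + e^g)`. -/
noncomputable def logAddExp {X : Type*} (f g : X → ℝ) (x : X) : ℝ :=
  Real.log (Real.exp (f x) + Real.exp (g x))

lemma exp_sub_logAddExp_add {X : Type*} (f g : X → ℝ) (x : X) :
    Real.exp (f x - logAddExp f g x) + Real.exp (g x - logAddExp f g x) = 1 := by
  have h : 0 < Real.exp (f x) + Real.exp (g x) := by positivity
  rw [Real.exp_sub, Real.exp_sub, logAddExp, Real.exp_log h, ← add_div, div_self h.ne']

lemma contDiffAt_logAddExp {k : WithTop ℕ∞} {f g : E → ℝ} {x : E}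
    (hf : ContDiffAt ℝ k f x) (hg : ContDiffAt ℝ k g x) :
    ContDiffAt ℝ k (logAddExp f g) x :=
  (hf.exp.add hg.exp).log (by positivity)

lemma hasFDerivAt_logAddExp {f g : E → ℝ} {x : E}
    (hf : DifferentiableAt ℝ f x) (hg : DifferentiableAt ℝ g x) :
    HasFDerivAt (logAddExp f g)
      (Real.exp (f x - logAddExp f g x) • fderiv ℝ f x
        + Real.exp (g x - logAddExp f g x) • fderiv ℝ g x) x := by
  have h : 0 < Real.exp (f x) + Real.exp (g x) := by positivity
  have key := (hf.hasFDerivAt.exp.add hg.hasFDerivAt.exp).log h.ne'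
  refine key.congr_fderiv ?_
  rw [Real.exp_sub, Real.exp_sub, logAddExp, Real.exp_log h, smul_add, smul_smul, smul_smul,
    div_eq_inv_mul, div_eq_inv_mul]
  rfl

/-- The second derivative of `log (e^f + e^g)` on the diagonal: the weighted mean of those of `f`
and `g`, plus a nonnegative rank-one term. -/
lemma hessian_logAddExp {f g : E → ℝ} {x : E}
    (hf : ContDiffAt ℝ 2 f x) (hg : ContDiffAt ℝ 2 g x) (w : E) :
    iteratedFDeriv ℝ 2 (logAddExp f g) x ![w, w] =
      Real.exp (f x - logAddExp f g x) * iteratedFDeriv ℝ 2 f x ![w, w]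
      + Real.exp (g x - logAddExp f g x) * iteratedFDeriv ℝ 2 g x ![w, w]
      + Real.exp (f x - logAddExp f g x) * Real.exp (g x - logAddExp f g x)
        * (fderiv ℝ f x w - fderiv ℝ g x w) ^ 2 := by
  have hφ := hasFDerivAt_logAddExp (hf.differentiableAt (by norm_num))
    (hg.differentiableAt (by norm_num))
  have hDf : HasFDerivAt (fderiv ℝ f) (fderiv ℝ (fderiv ℝ f) x) x :=
    ((hf.fderiv_right (m := 1) (by norm_num)).differentiableAt (by norm_num)).hasFDerivAt
  have hDg : HasFDerivAt (fderiv ℝ g) (fderiv ℝ (fderiv ℝ g) x) x :=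
    ((hg.fderiv_right (m := 1) (by norm_num)).differentiableAt (by norm_num)).hasFDerivAt
  have hp := ((hf.differentiableAt (by norm_num)).hasFDerivAt.sub hφ).exp
  have hq := ((hg.differentiableAt (by norm_num)).hasFDerivAt.sub hφ).exp
  have hD : fderiv ℝ (logAddExp f g) =ᶠ[nhds x] fun y =>
      Real.exp (f y - logAddExp f g y) • fderiv ℝ f y
        + Real.exp (g y - logAddExp f g y) • fderiv ℝ g y := by
    filter_upwards [hf.eventually (by simp), hg.eventually (by simp)] with y hfy hgy
    exact (hasFDerivAt_logAddExp (hfy.differentiableAt (by norm_num))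
      (hgy.differentiableAt (by norm_num))).fderiv
  have hDD := ((hp.smul hDf).add (hq.smul hDg)).congr_of_eventuallyEq hD
  have hsum := exp_sub_logAddExp_add f g x
  simp only [iteratedFDeriv_two_apply, hDD.fderiv, Matrix.cons_val_zero, Matrix.cons_val_one]
  simp
  -- Eliminating the second weight through `p + q = 1` leaves a polynomial identity.
  rw [← eq_sub_iff_add_eq'] at hsum
  rw [hsum]
  ring

/-- The weights are independent of the direction, so that the inequality can be summed over
several directions. -/
lemma exists_weights_le_hessian_logAddExp {f g : E → ℝ} {x : E}
    (hf : ContDiffAt ℝ 2 f x) (hg : ContDiffAt ℝ 2 g x) :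
    ∃ p q : ℝ, 0 ≤ p ∧ 0 ≤ q ∧ p + q = 1 ∧ ∀ w : E,
      p * iteratedFDeriv ℝ 2 f x ![w, w] + q * iteratedFDeriv ℝ 2 g x ![w, w]
        ≤ iteratedFDeriv ℝ 2 (logAddExp f g) x ![w, w] := by
  refine ⟨_, _, (Real.exp_pos _).le, (Real.exp_pos _).le, exp_sub_logAddExp_add f g x,
    fun w => ?_⟩
  rw [hessian_logAddExp hf hg w]
  exact le_add_of_nonneg_right (by positivity)

end LogAddExp

/-- if `φ₁, φ₂` are C² on an open set `U ⊆ ℂⁿ` with `L_{φⱼ}(x)(v) ≥ −M‖v‖²`,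
then `φ := log(e^{φ₁} + e^{φ₂})` is C² on `U` and satisfies `L_φ(x)(v) ≥ −M‖v‖²` on `U`. -/
theorem stmt7 (n : ℕ) (M : ℝ) (hM : 0 ≤ M)
    (U : Set (EuclideanSpace ℂ (Fin n))) (hU : IsOpen U)
    (φ₁ φ₂ : EuclideanSpace ℂ (Fin n) → ℝ)
    (h₁ : ContDiffOn ℝ 2 φ₁ U) (h₂ : ContDiffOn ℝ 2 φ₂ U)
    (hL₁ : ∀ x ∈ U, ∀ v : EuclideanSpace ℂ (Fin n), -M * ‖v‖ ^ 2 ≤ leviForm φ₁ x v)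
    (hL₂ : ∀ x ∈ U, ∀ v : EuclideanSpace ℂ (Fin n), -M * ‖v‖ ^ 2 ≤ leviForm φ₂ x v) :
    ContDiffOn ℝ 2 (fun x => Real.log (Real.exp (φ₁ x) + Real.exp (φ₂ x))) U ∧
    ∀ x ∈ U, ∀ v : EuclideanSpace ℂ (Fin n),
      -M * ‖v‖ ^ 2 ≤ leviForm (fun x => Real.log (Real.exp (φ₁ x) + Real.exp (φ₂ x))) x v := by
  refine ⟨fun x hx => (contDiffAt_logAddExp (h₁.contDiffAt (hU.mem_nhds hx))
    (h₂.contDiffAt (hU.mem_nhds hx))).contDiffWithinAt, fun x hx v => ?_⟩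
  obtain ⟨p, q, hp, hq, hpq, H⟩ := exists_weights_le_hessian_logAddExp
    (h₁.contDiffAt (hU.mem_nhds hx)) (h₂.contDiffAt (hU.mem_nhds hx))
  have hφ : p * leviForm φ₁ x v + q * leviForm φ₂ x v ≤ leviForm (logAddExp φ₁ φ₂) x v := by
    have hv := H v
    have hIv := H (Complex.I • v)
    unfold leviForm
    linarith
  calc -M * ‖v‖ ^ 2 = p * (-M * ‖v‖ ^ 2) + q * (-M * ‖v‖ ^ 2) := by rw [← add_mul, hpq, one_mul]
    _ ≤ p * leviForm φ₁ x v + q * leviForm φ₂ x v :=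
      add_le_add (mul_le_mul_of_nonneg_left (hL₁ x hx v) hp)
        (mul_le_mul_of_nonneg_left (hL₂ x hx v) hq)
    _ ≤ _ := hφ
end

section
/- Let q ≥ 1 and let μ be a positive Borel measure on ℂ^q ∖ {0}, finite on compact subsets of ℂ^q ∖ {0}, such that for every λ ∈ ℂ ∖ {0} the pushforward of μ under the scaling map v ↦ λ·v equals μ. If μ({v ∈ ℂ^q : 0 < ‖v‖ < 1}) < ∞, then μ = 0. -/
/-!
Invariance under real scalings forces every punctured ball `{0 < ‖v‖ < r}` to have the same
measure `c` (`measure_puncturedBall`), and `c` is finite. These balls decrease to `∅` as `r → 0`,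
so continuity from above gives `c = 0`; together with `{0}` they also exhaust `ℂ^q` as `r → ∞`,
hence `μ = 0`.
-/

open MeasureTheory

lemma measurableSet_puncturedBall {q : ℕ}
    [MeasurableSpace (EuclideanSpace ℂ (Fin q))] [BorelSpace (EuclideanSpace ℂ (Fin q))] (r : ℝ) :
    MeasurableSet {v : EuclideanSpace ℂ (Fin q) | 0 < ‖v‖ ∧ ‖v‖ < r} :=
  ((isOpen_lt continuous_const continuous_norm).inter
    (isOpen_lt continuous_norm continuous_const)).measurableSet

lemma measure_puncturedBall {q : ℕ}
    [MeasurableSpace (EuclideanSpace ℂ (Fin q))] [BorelSpace (EuclideanSpace ℂ (Fin q))]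
    (μ : Measure (EuclideanSpace ℂ (Fin q)))
    (hinv : ∀ l : ℂ, l ≠ 0 → Measure.map (fun v => l • v) μ = μ) {r : ℝ} (hr : 0 < r) :
    μ {v : EuclideanSpace ℂ (Fin q) | 0 < ‖v‖ ∧ ‖v‖ < r} =
      μ {v : EuclideanSpace ℂ (Fin q) | 0 < ‖v‖ ∧ ‖v‖ < 1} := by
  have hl : ((r⁻¹ : ℝ) : ℂ) ≠ 0 := Complex.ofReal_ne_zero.2 (inv_pos.2 hr).ne'
  conv_rhs => rw [← hinv _ hl]
  rw [Measure.map_apply (continuous_const_smul _).measurable (measurableSet_puncturedBall 1)]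
  congr 1
  ext v
  have hn : ‖((r⁻¹ : ℝ) : ℂ) • v‖ = r⁻¹ * ‖v‖ := by
    rw [norm_smul, Complex.norm_real, Real.norm_of_nonneg (inv_pos.2 hr).le]
  simp only [Set.mem_ofPred_eq, Set.mem_preimage, hn]
  rw [mul_pos_iff_of_pos_left (inv_pos.2 hr), inv_mul_lt_iff₀ hr, mul_one]

theorem stmt13 (q : ℕ) (hq : 1 ≤ q)
    [MeasurableSpace (EuclideanSpace ℂ (Fin q))] [BorelSpace (EuclideanSpace ℂ (Fin q))]
    (μ : Measure (EuclideanSpace ℂ (Fin q)))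
    (h0 : μ {0} = 0)
    (hcpt : ∀ K : Set (EuclideanSpace ℂ (Fin q)), IsCompact K →
      (0 : EuclideanSpace ℂ (Fin q)) ∉ K → μ K < ⊤)
    (hinv : ∀ l : ℂ, l ≠ 0 → Measure.map (fun v => l • v) μ = μ)
    (hfin : μ {v : EuclideanSpace ℂ (Fin q) | 0 < ‖v‖ ∧ ‖v‖ < 1} < ⊤) :
    μ = 0 := by
  let B : ℝ → Set (EuclideanSpace ℂ (Fin q)) := fun r => {v | 0 < ‖v‖ ∧ ‖v‖ < r}
  have hB : ∀ r, 0 < r → μ (B r) = μ (B 1) := fun r hr => measure_puncturedBall μ hinv hr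
  have hempty : ⋂ n : ℕ, B (1 / ((n : ℝ) + 1)) = ∅ := by
    refine Set.eq_empty_of_forall_notMem fun v hv => ?_
    rw [Set.mem_iInter] at hv
    obtain ⟨n, hn⟩ := exists_nat_one_div_lt (hv 0).1
    exact lt_asymm hn (hv n).2
  have hc : μ (B 1) = 0 := by
    have hlim := tendsto_measure_iInter_atTop (μ := μ)
      (s := fun n : ℕ => B (1 / ((n : ℝ) + 1)))
      (fun n => (measurableSet_puncturedBall _).nullMeasurableSet)
      (fun m n hmn v hv => ⟨hv.1, hv.2.trans_le (Nat.one_div_le_one_div hmn)⟩)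
      ⟨0, by rw [hB _ Nat.one_div_pos_of_nat]; exact hfin.ne⟩
    rw [hempty, measure_empty] at hlim
    refine tendsto_nhds_unique ?_ hlim
    exact tendsto_const_nhds.congr fun n => (hB _ Nat.one_div_pos_of_nat).symm
  have hcover : (Set.univ : Set (EuclideanSpace ℂ (Fin q))) ⊆
      {0} ∪ ⋃ n : ℕ, B ((n : ℝ) + 1) := by
    intro v _
    by_cases hv : v = 0
    · exact Or.inl hv
    · obtain ⟨n, hn⟩ := exists_nat_gt ‖v‖
      exact Or.inr (Set.mem_iUnion.2 ⟨n, norm_pos_iff.2 hv, hn.trans (lt_add_one _)⟩)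
  refine Measure.measure_univ_eq_zero.1 (measure_mono_null hcover (measure_union_null h0 ?_))
  exact measure_iUnion_null fun n => (hB _ (by positivity)).trans hc
end
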